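/- Let Y be a Polish space without isolated points and let E ⊆ Y be a set which is not always of 1st category (i.e., there exists a perfect set P ⊆ Y such that E ∩ P is non-meager in the subspace topology of P). Then E can be written as the union of two disjoint subsets E₁ and E₂ such that there is no set C ⊆ Y having the Baire property in the restricted sense with E₁ ⊆ C and C ∩ E₂ = ∅. -/

import Mathlib

/-!
Inside a second countable space whose points are meagre, a nonmeagre set `A` may be shrunk, along a
well-order of the space, to one all of whose initial segments are meagre. Cover `A ∩ Iic x` by
closed meagre sets `F x n`. Each `y ∈ A` then lies in `F x n` for all `x` in a nonmeagre subset
`M y n` of `A`, for some `n`. If every subset of `A` were the trace on `A` of a set with the Baire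
property, `M y n` would be comeagre in `A ∩ V` for some basic open `V` on which `A` is nonmeagre.
By countability the same pair `(V, n)` serves a nonmeagre set `B` of points `y`. Intersecting over a
countable dense subset of `B` yields a single `x` for which the closed set `F x n` contains a dense
subset of `B`, hence all of `B`; but `F x n` is meagre.
-/

/-- A set has the Baire property in the restricted sense if its trace on every
subspace `S` has the Baire property relative to the subspace topology of `S`. -/
def HasBairePropertyRestricted {Y : Type*} [TopologicalSpace Y] (C : Set Y) : Prop :=
  ∀ S : Set Y, ∃ U : Set S, IsOpen U ∧
    IsMeagre (symmDiff (Subtype.val ⁻¹' C : Set S) U)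

section

open Set TopologicalSpace Topology

variable {X Y : Type*} [TopologicalSpace X] [TopologicalSpace Y]

theorem isMeagre_symmDiff_iff_residualEq {s t : Set X} : IsMeagre (symmDiff s t) ↔ s =ᵇ t := by
  rw [Filter.eventuallyEq_set, IsMeagre, Filter.Eventually]
  congr! 1
  ext x
  simp only [mem_compl_iff, mem_symmDiff, mem_ofPred_eq]
  tauto

theorem HasBairePropertyRestricted.baireMeasurableSet_preimage_val {C : Set X}
    (hC : HasBairePropertyRestricted C) (S : Set X) :
    BaireMeasurableSet (Subtype.val ⁻¹' C : Set S) := by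
  obtain ⟨U, hU, hCU⟩ := hC S
  exact hU.baireMeasurableSet.congr (isMeagre_symmDiff_iff_residualEq.1 hCU).symm

theorem isMeagre_singleton [T1Space X] (x : X) [(𝓝[≠] x).NeBot] : IsMeagre {x} :=
  (isClosed_singleton.isNowhereDense_iff.2 (interior_singleton x)).isMeagre

theorem perfectSpace_coe_of_preperfect {P : Set X} (hP : Preperfect P) : PerfectSpace P := by
  refine ⟨preperfect_iff_nhds.2 fun x _ U hU ↦ ?_⟩
  obtain ⟨V, hV, hVU⟩ := mem_nhds_subtype P x U |>.1 hU
  obtain ⟨y, ⟨hyV, hyP⟩, hyx⟩ := preperfect_iff_nhds.1 hP x x.2 V hV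
  exact ⟨⟨y, hyP⟩, ⟨hVU hyV, mem_univ _⟩, fun h ↦ hyx (congrArg Subtype.val h)⟩

theorem exists_seq_isClosed_isMeagre_of_isMeagre {s : Set X} (hs : IsMeagre s) :
    ∃ F : ℕ → Set X, (∀ n, IsClosed (F n)) ∧ (∀ n, IsMeagre (F n)) ∧ s ⊆ ⋃ n, F n := by
  obtain ⟨S, hS, hSc, hsS⟩ := isMeagre_iff_countable_union_isNowhereDense.1 hs
  obtain ⟨f, hf⟩ := (hSc.insert ∅).exists_eq_range (insert_nonempty ∅ S)
  have hfd (n : ℕ) : IsNowhereDense (f n) := by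
    rcases hf ▸ mem_range_self n with h | h
    · exact h ▸ isNowhereDense_empty
    · exact hS _ h
  refine ⟨fun n ↦ closure (f n), fun n ↦ isClosed_closure, fun n ↦ (hfd n).closure.isMeagre, ?_⟩
  calc s ⊆ ⋃₀ S := hsS
    _ ⊆ ⋃₀ insert ∅ S := sUnion_subset_sUnion (subset_insert ∅ S)
    _ = ⋃ n, f n := by rw [hf, sUnion_range]
    _ ⊆ ⋃ n, closure (f n) := iUnion_mono fun n ↦ subset_closure

theorem exists_subset_forall_inter_Iio_of_antitone {α : Type*} [Preorder α] [WellFoundedLT α]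
    {p : Set α → Prop} (hp : Antitone p) {s : Set α} (hs : ¬ p s) :
    ∃ t ⊆ s, ¬ p t ∧ ∀ x ∈ t, p (t ∩ Iio x) := by
  by_cases! h : ∀ x, p (s ∩ Iio x)
  · exact ⟨s, Subset.rfl, hs, fun x _ ↦ h x⟩
  · obtain ⟨x, hx, hmin⟩ := (wellFounded_lt (α := α)).has_min {x | ¬ p (s ∩ Iio x)} h
    refine ⟨s ∩ Iio x, inter_subset_left, hx, fun y hy ↦ ?_⟩
    have hpy : p (s ∩ Iio y) := by_contra fun hy' ↦ hmin y hy' hy.2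
    exact hp (inter_subset_inter_left _ inter_subset_left) hpy

theorem exists_mem_basis_subset_not_isMeagre_inter {b : Set (Set X)} (hb : IsTopologicalBasis b)
    (hbc : b.Countable) {A U : Set X} (hU : IsOpen U) (hAU : ¬ IsMeagre (A ∩ U)) :
    ∃ V ∈ b, V ⊆ U ∧ ¬ IsMeagre (A ∩ V) := by
  by_contra! h
  have hm : IsMeagre (⋃ V ∈ {V ∈ b | V ⊆ U}, A ∩ V) :=
    isMeagre_biUnion (hbc.mono (sep_subset _ _)) fun V hV ↦ h V hV.1 hV.2
  rw [← inter_iUnion₂, ← sUnion_eq_biUnion, ← hb.open_eq_sUnion' hU] at hm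
  exact hAU hm

theorem exists_mem_basis_isMeagre_inter_diff {b : Set (Set X)} (hb : IsTopologicalBasis b)
    (hbc : b.Countable) {A C : Set X} (hC : BaireMeasurableSet C) (hAC : ¬ IsMeagre (A ∩ C)) :
    ∃ V ∈ b, ¬ IsMeagre (A ∩ V) ∧ IsMeagre ((A ∩ V) \ C) := by
  obtain ⟨U, hU, hCU⟩ := hC.residualEq_isOpen
  replace hCU : IsMeagre (symmDiff C U) := isMeagre_symmDiff_iff_residualEq.2 hCU
  have hAU : ¬ IsMeagre (A ∩ U) := fun h ↦ hAC <| (h.union hCU).mono <| by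
    intro x hx
    by_cases hxU : x ∈ U
    · exact .inl ⟨hx.1, hxU⟩
    · exact .inr (.inl ⟨hx.2, hxU⟩)
  obtain ⟨V, hVb, hVU, hAV⟩ := exists_mem_basis_subset_not_isMeagre_inter hb hbc hU hAU
  exact ⟨V, hVb, hAV, hCU.mono fun x hx ↦ .inr ⟨hVU hx.1.2, hx.2⟩⟩

theorem exists_subset_of_forall_isMeagre_notMem {A : Set X} (hA : ¬ IsMeagre A) {B : Set Y}
    [SeparableSpace B] {F : X → Set Y} (hF : ∀ x ∈ A, IsClosed (F x))
    (hB : ∀ y ∈ B, IsMeagre {x ∈ A | y ∉ F x}) :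
    ∃ x ∈ A, B ⊆ F x := by
  obtain ⟨D, hDc, hD⟩ := exists_countable_dense B
  have hm : IsMeagre (⋃ y ∈ D, {x ∈ A | (y : Y) ∉ F x}) :=
    isMeagre_biUnion hDc fun y _ ↦ hB y y.2
  obtain ⟨x, hxA, hx⟩ : ∃ x ∈ A, x ∉ ⋃ y ∈ D, {x ∈ A | (y : Y) ∉ F x} :=
    not_subset.1 fun h ↦ hA (hm.mono h)
  have hDF : D ⊆ Subtype.val ⁻¹' F x := fun y hy ↦
    by_contra fun hyF ↦ hx (mem_biUnion hy ⟨hxA, hyF⟩)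
  refine ⟨x, hxA, fun y hy ↦ ?_⟩
  exact closure_minimal hDF ((hF x hxA).preimage continuous_subtype_val) (hD ⟨y, hy⟩)

theorem exists_section_forall_baireMeasurableSet_inter_ne [SecondCountableTopology X]
    [SecondCountableTopology Y] {ι : Type*} [Countable ι] {A : Set X} {B : Set Y}
    (hB : ¬ IsMeagre B) {F : X → ι → Set Y} (hFc : ∀ x ∈ A, ∀ i, IsClosed (F x i))
    (hFm : ∀ x ∈ A, ∀ i, IsMeagre (F x i))
    (hF : ∀ y ∈ B, ∃ i, ¬ IsMeagre {x ∈ A | y ∈ F x i}) :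
    ∃ y i, ∀ C, BaireMeasurableSet C → A ∩ C ≠ {x ∈ A | y ∈ F x i} := by
  by_contra! hC
  let B' (V : Set X) (i : ι) : Set Y := {y ∈ B | IsMeagre {x ∈ A ∩ V | y ∉ F x i}}
  let b : Set (Set X) := {V ∈ countableBasis X | ¬ IsMeagre (A ∩ V)}
  have hBB' : B ⊆ ⋃ V ∈ b, ⋃ i, B' V i := by
    intro y hy
    obtain ⟨i, hi⟩ := hF y hy
    obtain ⟨C, hCm, hCy⟩ := hC y i
    obtain ⟨V, hVb, hAV, hVC⟩ := exists_mem_basis_isMeagre_inter_diff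
      (isBasis_countableBasis X) (countable_countableBasis X) hCm (hCy ▸ hi)
    refine mem_biUnion (show V ∈ b from ⟨hVb, hAV⟩) (mem_iUnion.2 ⟨i, hy, hVC.mono ?_⟩)
    exact fun x hx ↦ ⟨hx.1, fun hxC ↦ hx.2 (hCy.subset ⟨hx.1.1, hxC⟩).2⟩
  obtain ⟨V, hV, i, hBVi⟩ : ∃ V ∈ b, ∃ i, ¬ IsMeagre (B' V i) := by
    by_contra! h
    exact hB <| (isMeagre_biUnion ((countable_countableBasis X).mono (sep_subset _ _))
      fun V hV ↦ isMeagre_iUnion (h V hV)).mono hBB'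
  obtain ⟨x, hx, hxF⟩ := exists_subset_of_forall_isMeagre_notMem hV.2
    (fun x hx ↦ hFc x hx.1 i) (fun y hy ↦ hy.2 : ∀ y ∈ B' V i, _)
  exact hBVi ((hFm x hx.1 i).mono hxF)

theorem exists_subset_forall_baireMeasurableSet_inter_ne_of_Iio [SecondCountableTopology X]
    [LinearOrder X] (hX : ∀ x : X, IsMeagre {x}) {A : Set X} (hA : ¬ IsMeagre A)
    (hAlt : ∀ x ∈ A, IsMeagre (A ∩ Iio x)) :
    ∃ B ⊆ A, ∀ C, BaireMeasurableSet C → A ∩ C ≠ B := by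
  have hAle (x : X) (hx : x ∈ A) : IsMeagre (A ∩ Iic x) := by
    refine ((hAlt x hx).union (hX x)).mono ?_
    rw [← Iio_union_right, inter_union_distrib_left]
    exact union_subset_union_right _ inter_subset_right
  choose! F hFc hFm hF using fun x hx ↦ exists_seq_isClosed_isMeagre_of_isMeagre (hAle x hx)
  have hM (y : X) (hy : y ∈ A) : ∃ n, ¬ IsMeagre {x ∈ A | y ∈ F x n} := by
    by_contra! h
    refine hA (((hAlt y hy).union (isMeagre_iUnion h)).mono fun x hx ↦ ?_)
    rcases lt_or_ge x y with hxy | hyx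
    · exact .inl ⟨hx, hxy⟩
    · obtain ⟨n, hn⟩ := mem_iUnion.1 (hF x hx ⟨hy, hyx⟩)
      exact .inr (mem_iUnion.2 ⟨n, hx, hn⟩)
  obtain ⟨y, n, hyn⟩ := exists_section_forall_baireMeasurableSet_inter_ne hA hFc hFm hM
  exact ⟨_, sep_subset _ _, hyn⟩

theorem exists_subset_forall_baireMeasurableSet_inter_ne [SecondCountableTopology X]
    (hX : ∀ x : X, IsMeagre {x}) {A : Set X} (hA : ¬ IsMeagre A) :
    ∃ B ⊆ A, ∀ C, BaireMeasurableSet C → A ∩ C ≠ B := by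
  obtain ⟨_, _⟩ := exists_wellFoundedLT X
  obtain ⟨A', hA'A, hA', hA'lt⟩ :=
    exists_subset_forall_inter_Iio_of_antitone (fun _ _ hst hs ↦ hs.mono hst) hA
  obtain ⟨B, hBA', hB⟩ :=
    exists_subset_forall_baireMeasurableSet_inter_ne_of_Iio hX hA' hA'lt
  refine ⟨B, hBA'.trans hA'A, fun C hC hCB ↦ hB C hC ?_⟩
  rw [← inter_eq_left.2 hA'A, inter_assoc, hCB, inter_eq_right.2 hBA']

theorem not_alwaysFirstCategory_not_separated_general [SecondCountableTopology Y] [T1Space Y]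
    (E : Set Y) (hE : ∃ P : Set Y, Preperfect P ∧ ¬ IsMeagre (Subtype.val ⁻¹' E : Set P)) :
    ∃ E₁ E₂ : Set Y, E₁ ∪ E₂ = E ∧ Disjoint E₁ E₂ ∧
      ¬ ∃ C : Set Y, HasBairePropertyRestricted C ∧ E₁ ⊆ C ∧ C ∩ E₂ = ∅ := by
  obtain ⟨P, hP, hEP⟩ := hE
  have : PerfectSpace P := perfectSpace_coe_of_preperfect hP
  obtain ⟨B, hBE, hB⟩ :=
    exists_subset_forall_baireMeasurableSet_inter_ne (fun x : P ↦ isMeagre_singleton x) hEP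
  refine ⟨Subtype.val '' B, E \ Subtype.val '' B, union_sdiff_cancel (image_subset_iff.2 hBE),
    disjoint_sdiff_right, ?_⟩
  rintro ⟨C, hC, hBC, hCE⟩
  refine hB _ (hC.baireMeasurableSet_preimage_val P) (Subset.antisymm ?_ ?_)
  · rintro x ⟨hxE, hxC⟩
    by_contra hxB
    have hx : (x : Y) ∈ C ∩ (E \ Subtype.val '' B) :=
      ⟨hxC, hxE, mt Subtype.val_injective.mem_set_image.1 hxB⟩
    exact hCE.subset hx
  · exact subset_inter hBE (image_subset_iff.1 hBC)

end

/-- **Corollary 3.4.** In a Polish space without isolated points, every set that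
is not always of 1st category splits into two disjoint pieces which cannot be
separated by a set having the Baire property in the restricted sense. -/
theorem not_alwaysFirstCategory_not_separated {Y : Type*} [TopologicalSpace Y]
    [PolishSpace Y] (hni : ∀ y : Y, ¬ IsOpen ({y} : Set Y)) (E : Set Y)
    (hE : ∃ P : Set Y, Perfect P ∧ ¬ IsMeagre (Subtype.val ⁻¹' E : Set P)) :
    ∃ E₁ E₂ : Set Y, E₁ ∪ E₂ = E ∧ Disjoint E₁ E₂ ∧
      ¬ ∃ C : Set Y, HasBairePropertyRestricted C ∧ E₁ ⊆ C ∧ C ∩ E₂ = ∅ :=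
  not_alwaysFirstCategory_not_separated_general E (hE.imp fun _ h ↦ ⟨h.1.acc, h.2⟩)
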